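/- arXiv:2209.13259 — 8 statements merged into one kernel-verified Lean document; each statement's English description precedes it below -/
import Mathlib

section
/- Let μ_t, μ_c, λ be real numbers with 0 < λ < μ_t and λ < μ_c. For x, y > 0 define g(x,y) = μ_t·exp(−μ_t y)·exp(−(μ_t−λ)x) + (μ_t(μ_t−λ)/(2μ_t−λ)) · h(x,y), where h(x,y) = exp(−(μ_t−λ)x)·(exp((μ_t−λ)y) − exp(−μ_t y)) if y ≤ x and h(x,y) = (exp(μ_t x) − exp(−(μ_t−λ)x))·exp(−μ_t y) if y > x. Then ∫₀^∞ ∫₀^∞ ∫₀^∞ x · t · (μ_c−λ)·exp(−(μ_c−λ)(t+y)) · g(x,y) · λ·exp(−λx) dt dy dx = λ/(μ_c²(μ_c−λ)) + λ/(μ_t μ_c (μ_t + μ_c − λ)). -/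
open MeasureTheory Real Set

/-!
Let `T` be the sojourn time of the previous task in the transmission queue and `S` the service time
of the current one, exponential with rates `β = μt - λ` and `μt`. Given `X = x`, the inter-departure
time is `D = max (x - T) 0 + S`, so its density is a convolution and its Laplace transform factors.
The `t`-integral turns the waiting-time density into `exp (-(ν * y)) / ν` with `ν = μc - λ`, so that
the `y`-integral is this Laplace transform at `ν`. What remains is the first moment in `x` of
another convolution of two exponentials, computed from
`x * (f ⋆ g) x = ((t * f) ⋆ g) x + (f ⋆ (t * g)) x`. Keeping the convolutions unevaluated avoids
a separate case for coinciding rates.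
-/

section ExponentialMoments

lemma integrableOn_pow_mul_exp_neg_mul_Ioi_zero (n : ℕ) {r : ℝ} (hr : 0 < r) :
    IntegrableOn (fun x : ℝ => x ^ n * exp (-(r * x))) (Ioi 0) := by
  have hn : (-1 : ℝ) < n := by linarith [n.cast_nonneg (α := ℝ)]
  simpa using integrableOn_rpow_mul_exp_neg_mul_rpow (p := 1) hn one_pos hr

lemma integral_pow_mul_exp_neg_mul_Ioi_zero (n : ℕ) {r : ℝ} (hr : 0 < r) :
    ∫ x in Ioi (0 : ℝ), x ^ n * exp (-(r * x)) = n.factorial / r ^ (n + 1) := by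
  have h := integral_rpow_mul_exp_neg_mul_Ioi (a := n + 1) (by positivity) hr
  rw [Gamma_nat_eq_factorial] at h
  simp only [add_sub_cancel_right, rpow_natCast] at h
  rw [h, ← Nat.cast_add_one, rpow_natCast, one_div_pow, one_div_mul_eq_div]

lemma integrableOn_exp_neg_mul_Ioi_zero {r : ℝ} (hr : 0 < r) :
    IntegrableOn (fun x : ℝ => exp (-(r * x))) (Ioi 0) := by
  simpa using integrableOn_pow_mul_exp_neg_mul_Ioi_zero 0 hr

lemma integral_exp_neg_mul_Ioi_zero {r : ℝ} (hr : 0 < r) :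
    ∫ x in Ioi (0 : ℝ), exp (-(r * x)) = 1 / r := by
  simpa using integral_pow_mul_exp_neg_mul_Ioi_zero 0 hr

lemma integrableOn_mul_exp_neg_mul_Ioi_zero {r : ℝ} (hr : 0 < r) :
    IntegrableOn (fun x : ℝ => x * exp (-(r * x))) (Ioi 0) := by
  simpa using integrableOn_pow_mul_exp_neg_mul_Ioi_zero 1 hr

lemma integral_mul_exp_neg_mul_Ioi_zero {r : ℝ} (hr : 0 < r) :
    ∫ x in Ioi (0 : ℝ), x * exp (-(r * x)) = 1 / r ^ 2 := by
  simpa using integral_pow_mul_exp_neg_mul_Ioi_zero 1 hr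

lemma integral_mul_exponentialDensity_add {ν : ℝ} (hν : 0 < ν) (y : ℝ) :
    ∫ t in Ioi (0 : ℝ), t * (ν * exp (-(ν * (t + y)))) = exp (-(ν * y)) / ν := by
  have hsplit (t : ℝ) : t * (ν * exp (-(ν * (t + y))))
      = ν * exp (-(ν * y)) * (t * exp (-(ν * t))) := by
    rw [show -(ν * (t + y)) = -(ν * y) + -(ν * t) by ring, exp_add]
    ring
  simp only [hsplit]
  rw [integral_const_mul, integral_mul_exp_neg_mul_Ioi_zero hν]
  field_simp

end ExponentialMoments

lemma integrableOn_Ioi_indicator_Iic {E : Type*} [NormedAddCommGroup E] {f : ℝ → E} {x : ℝ}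
    (hf : IntegrableOn f (Ioc 0 x)) :
    IntegrableOn ((Iic x).indicator f) (Ioi 0) := by
  rwa [IntegrableOn, integrable_indicator_iff measurableSet_Iic, IntegrableOn,
    Measure.restrict_restrict measurableSet_Iic, Iic_inter_Ioi]

section ForwardConvolution

variable {E E' F : Type*} [NormedAddCommGroup E] [NormedSpace ℝ E]
  [NormedAddCommGroup E'] [NormedSpace ℝ E'] [NormedAddCommGroup F] [NormedSpace ℝ F]
  {f : ℝ → E} {g : ℝ → E'}

lemma integrableOn_forwardConvolution (hf : IntegrableOn f (Ioi 0)) (hg : IntegrableOn g (Ioi 0))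
    (L : E →L[ℝ] E' →L[ℝ] F) :
    IntegrableOn (fun x => ∫ t in 0..x, L (f t) (g (x - t))) (Ioi 0) :=
  (integrable_indicator_iff measurableSet_Ioi).mp (integrable_posConvolution hf hg L)

lemma ae_intervalIntegrable_forwardConvolution (hf : IntegrableOn f (Ioi 0))
    (hg : IntegrableOn g (Ioi 0)) (L : E →L[ℝ] E' →L[ℝ] F) :
    ∀ᵐ x, 0 < x → IntervalIntegrable (fun t => L (f t) (g (x - t))) volume 0 x := by
  have hf' := (integrable_indicator_iff measurableSet_Ioi).mpr hf
  have hg' := (integrable_indicator_iff measurableSet_Ioi).mpr hg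
  filter_upwards [hf'.ae_convolution_exists L hg'] with x hconv hx
  rw [intervalIntegrable_iff_integrableOn_Ioo_of_le hx.le]
  refine hconv.integrableOn.congr_fun (fun t ht => ?_) measurableSet_Ioo
  simp only [indicator_of_mem (mem_Ioi.mpr ht.1),
    indicator_of_mem (mem_Ioi.mpr (sub_pos.mpr ht.2))]

lemma ae_smul_forwardConvolution (hf : IntegrableOn f (Ioi 0)) (hg : IntegrableOn g (Ioi 0))
    (hf₁ : IntegrableOn (fun t => t • f t) (Ioi 0)) (hg₁ : IntegrableOn (fun t => t • g t) (Ioi 0))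
    (L : E →L[ℝ] E' →L[ℝ] F) :
    ∀ᵐ x ∂volume.restrict (Ioi 0), x • ∫ t in 0..x, L (f t) (g (x - t))
      = (∫ t in 0..x, L (t • f t) (g (x - t))) + ∫ t in 0..x, L (f t) ((x - t) • g (x - t)) := by
  rw [ae_restrict_iff' measurableSet_Ioi]
  filter_upwards [ae_intervalIntegrable_forwardConvolution hf₁ hg L,
    ae_intervalIntegrable_forwardConvolution hf hg₁ L] with x hleft hright hx
  rw [← intervalIntegral.integral_add (hleft hx) (hright hx), ← intervalIntegral.integral_smul]
  refine intervalIntegral.integral_congr fun t _ => ?_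
  simp only [map_smul, smul_apply, ← add_smul, add_sub_cancel]

lemma integrableOn_smul_forwardConvolution
    (hf : IntegrableOn f (Ioi 0)) (hg : IntegrableOn g (Ioi 0))
    (hf₁ : IntegrableOn (fun t => t • f t) (Ioi 0)) (hg₁ : IntegrableOn (fun t => t • g t) (Ioi 0))
    (L : E →L[ℝ] E' →L[ℝ] F) :
    IntegrableOn (fun x => x • ∫ t in 0..x, L (f t) (g (x - t))) (Ioi 0) :=
  ((integrableOn_forwardConvolution hf₁ hg L).add
    (integrableOn_forwardConvolution hf hg₁ L)).congr
      ((ae_smul_forwardConvolution hf hg hf₁ hg₁ L).mono fun _ => Eq.symm)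

lemma integral_smul_forwardConvolution [CompleteSpace E] [CompleteSpace E'] [CompleteSpace F]
    (hf : IntegrableOn f (Ioi 0)) (hg : IntegrableOn g (Ioi 0))
    (hf₁ : IntegrableOn (fun t => t • f t) (Ioi 0)) (hg₁ : IntegrableOn (fun t => t • g t) (Ioi 0))
    (L : E →L[ℝ] E' →L[ℝ] F) :
    ∫ x in Ioi (0 : ℝ), x • ∫ t in 0..x, L (f t) (g (x - t))
      = L (∫ t in Ioi (0 : ℝ), t • f t) (∫ t in Ioi (0 : ℝ), g t)
        + L (∫ t in Ioi (0 : ℝ), f t) (∫ t in Ioi (0 : ℝ), t • g t) := by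
  rw [integral_congr_ae (ae_smul_forwardConvolution hf hg hf₁ hg₁ L),
    integral_add (integrableOn_forwardConvolution hf₁ hg L)
      (integrableOn_forwardConvolution hf hg₁ L),
    integral_posConvolution hf₁ hg L, integral_posConvolution hf hg₁ L]

lemma exp_smul_forwardConvolution (f : ℝ → E) (g : ℝ → E') (L : E →L[ℝ] E' →L[ℝ] F) (a x : ℝ) :
    exp (-(a * x)) • ∫ t in 0..x, L (f t) (g (x - t))
      = ∫ t in 0..x, L (exp (-(a * t)) • f t) (exp (-(a * (x - t))) • g (x - t)) := by
  rw [← intervalIntegral.integral_smul]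
  refine intervalIntegral.integral_congr fun t _ => ?_
  simp only [map_smul, smul_apply, smul_smul, ← exp_add]
  ring_nf

lemma intervalIntegral_zero_min_eq_indicator (f : ℝ → E) {x : ℝ} (hx : 0 ≤ x) (y : ℝ) :
    ∫ s in 0..min x y, f s = ∫ s in 0..y, (Iic x).indicator f s := by
  rcases le_total x y with hxy | hyx
  · rw [min_eq_left hxy]
    exact (intervalIntegral.integral_indicator ⟨hx, hxy⟩).symm
  · rw [min_eq_right hyx]
    refine intervalIntegral.integral_congr fun s hs => ?_
    exact (indicator_of_mem (mem_Iic.mpr (hs.2.trans (max_le hx hyx))) f).symm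

lemma forwardConvolution_min (f : ℝ → E) (g : ℝ → E') (L : E →L[ℝ] E' →L[ℝ] F) {x : ℝ}
    (hx : 0 ≤ x) (y : ℝ) :
    ∫ t in 0..min x y, L (f t) (g (y - t))
      = ∫ t in 0..y, L ((Iic x).indicator f t) (g (y - t)) := by
  rw [intervalIntegral_zero_min_eq_indicator _ hx]
  refine intervalIntegral.integral_congr fun t _ => ?_
  by_cases ht : t ∈ Iic x
  · simp only [indicator_of_mem ht]
  · simp only [indicator_of_notMem ht, map_zero, zero_apply]

lemma integrableOn_forwardConvolution_min {x : ℝ} (hx : 0 ≤ x) (hf : IntegrableOn f (Ioc 0 x))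
    (hg : IntegrableOn g (Ioi 0)) (L : E →L[ℝ] E' →L[ℝ] F) :
    IntegrableOn (fun y => ∫ t in 0..min x y, L (f t) (g (y - t))) (Ioi 0) := by
  simp only [forwardConvolution_min f g L hx]
  exact integrableOn_forwardConvolution (integrableOn_Ioi_indicator_Iic hf) hg L

lemma integral_forwardConvolution_min [CompleteSpace E] [CompleteSpace E'] [CompleteSpace F]
    {x : ℝ} (hx : 0 ≤ x) (hf : IntegrableOn f (Ioc 0 x)) (hg : IntegrableOn g (Ioi 0))
    (L : E →L[ℝ] E' →L[ℝ] F) :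
    ∫ y in Ioi (0 : ℝ), ∫ t in 0..min x y, L (f t) (g (y - t))
      = L (∫ t in 0..x, f t) (∫ u in Ioi (0 : ℝ), g u) := by
  simp only [forwardConvolution_min f g L hx]
  rw [integral_posConvolution (integrableOn_Ioi_indicator_Iic hf) hg L,
    setIntegral_indicator measurableSet_Iic, Ioi_inter_Iic, intervalIntegral.integral_of_le hx]

end ForwardConvolution

section ExponentialConvolution

variable {p q : ℝ}

lemma exp_mul_expConvolution (a p q x : ℝ) :
    exp (-(a * x)) * ∫ s in 0..x, exp (-(p * s)) * exp (-(q * (x - s)))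
      = ∫ s in 0..x, exp (-((a + p) * s)) * exp (-((a + q) * (x - s))) := by
  have hexp (r s : ℝ) : exp (-(a * s)) * exp (-(r * s)) = exp (-((a + r) * s)) := by
    rw [← exp_add]
    ring_nf
  simpa [hexp] using exp_smul_forwardConvolution (fun s => exp (-(p * s)))
    (fun u => exp (-(q * u))) (ContinuousLinearMap.mul ℝ ℝ) a x

lemma integrableOn_mul_expConvolution (hp : 0 < p) (hq : 0 < q) :
    IntegrableOn (fun x => x * ∫ s in 0..x, exp (-(p * s)) * exp (-(q * (x - s)))) (Ioi 0) :=
  integrableOn_smul_forwardConvolution (integrableOn_exp_neg_mul_Ioi_zero hp)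
    (integrableOn_exp_neg_mul_Ioi_zero hq) (integrableOn_mul_exp_neg_mul_Ioi_zero hp)
    (integrableOn_mul_exp_neg_mul_Ioi_zero hq) (ContinuousLinearMap.mul ℝ ℝ)

lemma integral_mul_expConvolution (hp : 0 < p) (hq : 0 < q) :
    ∫ x in Ioi (0 : ℝ), x * ∫ s in 0..x, exp (-(p * s)) * exp (-(q * (x - s)))
      = 1 / p ^ 2 * (1 / q) + 1 / p * (1 / q ^ 2) := by
  rw [← integral_exp_neg_mul_Ioi_zero hp, ← integral_exp_neg_mul_Ioi_zero hq,
    ← integral_mul_exp_neg_mul_Ioi_zero hp, ← integral_mul_exp_neg_mul_Ioi_zero hq]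
  exact integral_smul_forwardConvolution (integrableOn_exp_neg_mul_Ioi_zero hp)
    (integrableOn_exp_neg_mul_Ioi_zero hq) (integrableOn_mul_exp_neg_mul_Ioi_zero hp)
    (integrableOn_mul_exp_neg_mul_Ioi_zero hq) (ContinuousLinearMap.mul ℝ ℝ)

lemma integral_exp_mul_exp_sub (hpq : p + q ≠ 0) (x y z : ℝ) :
    ∫ s in 0..z, exp (-(p * (x - s))) * exp (-(q * (y - s)))
      = exp (-(p * x)) * exp (-(q * y)) * ((exp ((p + q) * z) - 1) / (p + q)) := by
  have hsplit (s : ℝ) : exp (-(p * (x - s))) * exp (-(q * (y - s)))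
      = exp (-(p * x)) * exp (-(q * y)) * exp ((p + q) * s) := by
    simp only [← exp_add]
    ring_nf
  simp only [hsplit, intervalIntegral.integral_const_mul]
  rw [intervalIntegral.integral_comp_mul_left (fun s => exp s) hpq, integral_exp, mul_zero,
    exp_zero, smul_eq_mul, inv_mul_eq_div]

end ExponentialConvolution

section Departure

/-- The density at `y` of the inter-departure time `max (x - T) 0 + S` from a queue given the
inter-arrival time `x`, where the previous sojourn time `T` and the service time `S` are independent
exponentials of rates `β` and `μ`. The first summand accounts for `x ≤ T`; in the integral, `s` is
the value of the idle period `x - T`. -/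
noncomputable def departureDensity (μ β x y : ℝ) : ℝ :=
  exp (-(β * x)) * (μ * exp (-(μ * y)))
    + ∫ s in 0..min x y, (β * exp (-(β * (x - s)))) * (μ * exp (-(μ * (y - s))))

/-- The Laplace transform at `a` of the idle period `max (x - T) 0` given the inter-arrival time
`x`, where the previous sojourn time `T` is exponential of rate `β`. -/
noncomputable def idleLaplace (β a x : ℝ) : ℝ :=
  exp (-(β * x)) + β * ∫ s in 0..x, exp (-(a * s)) * exp (-(β * (x - s)))

lemma departureDensity_eq_ite {μ β : ℝ} (hμβ : μ + β ≠ 0) (x y : ℝ) :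
    departureDensity μ β x y
      = μ * exp (-(μ * y)) * exp (-(β * x)) + μ * β / (μ + β) *
          (if y ≤ x then exp (-(β * x)) * (exp (β * y) - exp (-(μ * y)))
           else (exp (μ * x) - exp (-(β * x))) * exp (-(μ * y))) := by
  have hβμ : β + μ ≠ 0 := by rwa [add_comm]
  have hpull (s : ℝ) : (β * exp (-(β * (x - s)))) * (μ * exp (-(μ * (y - s))))
      = μ * β * (exp (-(β * (x - s))) * exp (-(μ * (y - s)))) := by ring
  simp only [departureDensity, hpull, intervalIntegral.integral_const_mul,
    integral_exp_mul_exp_sub hβμ]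
  split_ifs with hyx
  · have hcancel : exp (-(μ * y)) * exp ((β + μ) * y) = exp (β * y) := by
      rw [← exp_add]
      ring_nf
    rw [min_eq_right hyx, ← hcancel, add_comm μ β]
    ring
  · have hcancel : exp (-(β * x)) * exp ((β + μ) * x) = exp (μ * x) := by
      rw [← exp_add]
      ring_nf
    rw [min_eq_left (not_le.mp hyx).le, ← hcancel, add_comm μ β]
    ring

lemma exp_mul_departureDensity (μ β a x y : ℝ) :
    exp (-(a * y)) * departureDensity μ β x y
      = exp (-(β * x)) * (μ * exp (-((μ + a) * y)))
        + ∫ s in 0..min x y, (β * (exp (-(a * s)) * exp (-(β * (x - s)))))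
            * (μ * exp (-((μ + a) * (y - s)))) := by
  have hexp (r : ℝ) : exp (-((μ + a) * r)) = exp (-(a * r)) * exp (-(μ * r)) := by
    rw [← exp_add]
    ring_nf
  rw [departureDensity, mul_add, ← intervalIntegral.integral_const_mul, hexp]
  congr 1
  · ring
  · refine intervalIntegral.integral_congr fun s _ => ?_
    have hshift : exp (-(a * y)) = exp (-(a * s)) * exp (-(a * (y - s))) := by
      rw [← exp_add]
      ring_nf
    simp only [hshift, hexp]
    ring

lemma integral_exp_mul_departureDensity {μ a : ℝ} (hμa : 0 < μ + a) (β : ℝ) {x : ℝ} (hx : 0 ≤ x) :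
    ∫ y in Ioi (0 : ℝ), exp (-(a * y)) * departureDensity μ β x y
      = μ / (μ + a) * idleLaplace β a x := by
  set idle : ℝ → ℝ := fun s => β * (exp (-(a * s)) * exp (-(β * (x - s)))) with hidle_def
  set service : ℝ → ℝ := fun u => μ * exp (-((μ + a) * u)) with hservice_def
  have hidle : IntegrableOn idle (Ioc 0 x) := Continuous.integrableOn_Ioc (by fun_prop)
  have hservice : IntegrableOn service (Ioi 0) :=
    (integrableOn_exp_neg_mul_Ioi_zero hμa).const_mul μ
  have hservice_integral : ∫ u in Ioi (0 : ℝ), service u = μ / (μ + a) := by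
    rw [hservice_def, integral_const_mul, integral_exp_neg_mul_Ioi_zero hμa, mul_one_div]
  calc ∫ y in Ioi (0 : ℝ), exp (-(a * y)) * departureDensity μ β x y
      = ∫ y in Ioi (0 : ℝ), (exp (-(β * x)) * service y
          + ∫ s in 0..min x y, ContinuousLinearMap.mul ℝ ℝ (idle s) (service (y - s))) := by
        simp only [exp_mul_departureDensity, ContinuousLinearMap.mul_apply', idle, service]
    _ = exp (-(β * x)) * (∫ y in Ioi (0 : ℝ), service y)
          + (∫ s in 0..x, idle s) * ∫ u in Ioi (0 : ℝ), service u := by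
        rw [integral_add (hservice.const_mul _)
            (integrableOn_forwardConvolution_min hx hidle hservice _),
          integral_forwardConvolution_min hx hidle hservice, integral_const_mul,
          ContinuousLinearMap.mul_apply']
    _ = μ / (μ + a) * idleLaplace β a x := by
        rw [hservice_integral, hidle_def, intervalIntegral.integral_const_mul, idleLaplace]
        ring

lemma integral_mul_exp_mul_idleLaplace {r β a : ℝ} (hβ : 0 < r + β) (ha : 0 < r + a) :
    ∫ x in Ioi (0 : ℝ), x * (exp (-(r * x)) * idleLaplace β a x)
      = 1 / (r + β) ^ 2
        + β * (1 / (r + a) ^ 2 * (1 / (r + β)) + 1 / (r + a) * (1 / (r + β) ^ 2)) := by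
  have hsplit (x : ℝ) : x * (exp (-(r * x)) * idleLaplace β a x)
      = x * exp (-((r + β) * x))
        + β * (x * ∫ s in 0..x, exp (-((r + a) * s)) * exp (-((r + β) * (x - s)))) := by
    rw [← exp_mul_expConvolution, idleLaplace, add_mul, neg_add, exp_add]
    ring
  simp only [hsplit]
  rw [integral_add (integrableOn_mul_exp_neg_mul_Ioi_zero hβ)
      ((integrableOn_mul_expConvolution ha hβ).const_mul β),
    integral_const_mul, integral_mul_exp_neg_mul_Ioi_zero hβ, integral_mul_expConvolution ha hβ]

lemma integral_mul_exp_mul_integral_departureDensity {r μ β a : ℝ} (hμ : 0 < μ + a)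
    (hβ : 0 < r + β) (ha : 0 < r + a) :
    ∫ x in Ioi (0 : ℝ), ∫ y in Ioi (0 : ℝ),
        x * exp (-(r * x)) * (exp (-(a * y)) * departureDensity μ β x y)
      = μ / (μ + a) * (1 / (r + β) ^ 2
        + β * (1 / (r + a) ^ 2 * (1 / (r + β)) + 1 / (r + a) * (1 / (r + β) ^ 2))) := by
  rw [← integral_mul_exp_mul_idleLaplace hβ ha, ← integral_const_mul]
  refine setIntegral_congr_fun measurableSet_Ioi fun x hx => ?_
  simp only [integral_const_mul, integral_exp_mul_departureDensity hμ β (le_of_lt hx)]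
  ring

end Departure

theorem stmt_2_general (μt μc lam : ℝ) (ht : 0 < μt) (hc : 0 < μc) (hlam_c : lam < μc)
    (hlam_t : 2 * μt - lam ≠ 0) (g : ℝ → ℝ → ℝ)
    (hg : ∀ x y : ℝ, 0 < x → 0 < y →
      g x y = μt * exp (-(μt * y)) * exp (-((μt - lam) * x))
        + μt * (μt - lam) / (2 * μt - lam) *
          (if y ≤ x then exp (-((μt - lam) * x)) * (exp ((μt - lam) * y) - exp (-(μt * y)))
           else (exp (μt * x) - exp (-((μt - lam) * x))) * exp (-(μt * y)))) :
    ∫ x in Ioi (0:ℝ), ∫ y in Ioi (0:ℝ), ∫ t in Ioi (0:ℝ),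
        x * t * ((μc - lam) * exp (-((μc - lam) * (t + y)))) * g x y * (lam * exp (-(lam * x)))
      = lam / (μc ^ 2 * (μc - lam)) + lam / (μt * μc * (μt + μc - lam)) := by
  have hrates : μt + (μt - lam) = 2 * μt - lam := by ring
  have hdensity {x y : ℝ} (hx : 0 < x) (hy : 0 < y) :
      g x y = departureDensity μt (μt - lam) x y := by
    rw [hg x y hx hy, departureDensity_eq_ite (hrates ▸ hlam_t), hrates]
  have hν : 0 < μc - lam := sub_pos.mpr hlam_c
  calc
    _ = ∫ x in Ioi (0 : ℝ), lam / (μc - lam) * ∫ y in Ioi (0 : ℝ), x * exp (-(lam * x)) *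
          (exp (-((μc - lam) * y)) * departureDensity μt (μt - lam) x y) := by
        refine setIntegral_congr_fun measurableSet_Ioi fun x hx => ?_
        rw [← integral_const_mul]
        refine setIntegral_congr_fun measurableSet_Ioi fun y hy => ?_
        rw [integral_mul_const, integral_mul_const]
        simp only [mul_assoc x]
        rw [integral_const_mul, integral_mul_exponentialDensity_add hν, hdensity hx hy]
        ring
    _ = lam / (μc - lam) * (μt / (μt + (μc - lam)) *
          (1 / μt ^ 2 + (μt - lam) * (1 / μc ^ 2 * (1 / μt) + 1 / μc * (1 / μt ^ 2)))) := by
        rw [integral_const_mul, integral_mul_exp_mul_integral_departureDensity (by linarith)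
          (by linarith) (by linarith), add_sub_cancel, add_sub_cancel]
    _ = lam / (μc ^ 2 * (μc - lam)) + lam / (μt * μc * (μt + μc - lam)) := by
        have hsum : μt + μc - lam ≠ 0 := by linarith
        rw [← add_sub_assoc]
        field_simp [hν.ne']
        ring

/-- E[X_n W_{n,c}] in the M/M/1–M/M/1 tandem (equation (19)). -/
theorem stmt_2 (μt μc lam : ℝ) (hlam : 0 < lam) (ht : lam < μt) (hc : lam < μc)
    (g : ℝ → ℝ → ℝ)
    (hg : ∀ x y : ℝ, 0 < x → 0 < y →
      g x y = μt * exp (-(μt * y)) * exp (-((μt - lam) * x))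
        + μt * (μt - lam) / (2 * μt - lam) *
          (if y ≤ x then exp (-((μt - lam) * x)) * (exp ((μt - lam) * y) - exp (-(μt * y)))
           else (exp (μt * x) - exp (-((μt - lam) * x))) * exp (-(μt * y)))) :
    ∫ x in Ioi (0:ℝ), ∫ y in Ioi (0:ℝ), ∫ t in Ioi (0:ℝ),
        x * t * ((μc - lam) * exp (-((μc - lam) * (t + y)))) * g x y * (lam * exp (-(lam * x)))
      = lam / (μc ^ 2 * (μc - lam)) + lam / (μt * μc * (μt + μc - lam)) := by
  exact stmt_2_general μt μc lam (hlam.trans ht) (hlam.trans hc) hc (by linarith) g hg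
end

section
/- Let μ_t, μ_c be real numbers with 0 < μ_t < μ_c. Then 1/μ_t + 1/μ_c + 1/μ_t + ∫₀^∞ ∫₀^∞ t·(μ_c−μ_t)·exp(−(μ_c−μ_t)(t+y))·μ_t·exp(−μ_t y) dt dy = 2/μ_t + 1/μ_c + μ_t/(μ_c(μ_c−μ_t)); in particular the double integral equals μ_t/(μ_c(μ_c−μ_t)). -/
open MeasureTheory Real Set

/-!
Since `θ * (t + y) + μ * y = θ * t + (θ + μ) * y`, the integrand separates. The `y`-integral
contributes `μ / (θ + μ)`, the probability of having to wait, and what remains is the mean of an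
exponential variable of rate `θ`. For the tandem, `θ = μc - μt` and `μ = μt`.
-/

lemma integral_exp_neg_mul_Ioi_zero_s4 {a : ℝ} (ha : 0 < a) :
    ∫ y in Ioi (0 : ℝ), exp (-(a * y)) = a⁻¹ := by
  simpa [neg_mul] using integral_exp_mul_Ioi (neg_lt_zero.mpr ha) 0

lemma integral_rpow_mul_exponential_density {s r : ℝ} (hs : -1 < s) (hr : 0 < r) :
    ∫ t in Ioi (0 : ℝ), t ^ s * (r * exp (-(r * t))) = Gamma (s + 1) / r ^ s := by
  have hΓ := integral_rpow_mul_exp_neg_mul_Ioi (a := s + 1) (by linarith) hr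
  rw [add_sub_cancel_right] at hΓ
  simp_rw [mul_left_comm _ r]
  rw [integral_const_mul, hΓ, one_div, inv_rpow hr.le, rpow_add_one hr.ne']
  field_simp

lemma integral_id_mul_exponential_density {r : ℝ} (hr : 0 < r) :
    ∫ t in Ioi (0 : ℝ), t * (r * exp (-(r * t))) = r⁻¹ := by
  simpa [one_add_one_eq_two] using
    integral_rpow_mul_exponential_density (s := 1) (by norm_num) hr

lemma integral_mul_exponential_density_shift_mul (ν : Measure ℝ) (f : ℝ → ℝ) (θ μ y : ℝ) :
    ∫ t, f t * (θ * exp (-(θ * (t + y)))) * (μ * exp (-(μ * y))) ∂ν =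
      μ * exp (-((θ + μ) * y)) * ∫ t, f t * (θ * exp (-(θ * t))) ∂ν := by
  have exp_separates (t : ℝ) :
      exp (-(θ * (t + y))) * exp (-(μ * y)) = exp (-((θ + μ) * y)) * exp (-(θ * t)) := by
    rw [← exp_add, ← exp_add]
    ring_nf
  rw [← integral_const_mul]
  congr with t
  linear_combination f t * θ * μ * exp_separates t

lemma integral_integral_mul_exponential_density_shift_mul (ν : Measure ℝ) (f : ℝ → ℝ)
    {θ μ : ℝ} (h : 0 < θ + μ) :
    ∫ y in Ioi (0 : ℝ), ∫ t, f t * (θ * exp (-(θ * (t + y)))) * (μ * exp (-(μ * y))) ∂ν =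
      μ / (θ + μ) * ∫ t, f t * (θ * exp (-(θ * t))) ∂ν := by
  simp_rw [integral_mul_exponential_density_shift_mul]
  rw [integral_mul_const, integral_const_mul, integral_exp_neg_mul_Ioi_zero_s4 h, div_eq_mul_inv]

/-- Corollary 1: timeliness of information under the zero-wait policy in the
M/M/1–M/M/1 tandem. -/
theorem stmt_4 (μt μc : ℝ) (ht : 0 < μt) (hc : μt < μc) :
    (1 / μt + 1 / μc + 1 / μt + ∫ y in Ioi (0:ℝ), ∫ t in Ioi (0:ℝ),
        t * ((μc - μt) * exp (-((μc - μt) * (t + y)))) * (μt * exp (-(μt * y)))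
      = 2 / μt + 1 / μc + μt / (μc * (μc - μt))) ∧
    (∫ y in Ioi (0:ℝ), ∫ t in Ioi (0:ℝ),
        t * ((μc - μt) * exp (-((μc - μt) * (t + y)))) * (μt * exp (-(μt * y)))
      = μt / (μc * (μc - μt))) := by
  have expected_wait : ∫ y in Ioi (0 : ℝ), ∫ t in Ioi (0 : ℝ),
      t * ((μc - μt) * exp (-((μc - μt) * (t + y)))) * (μt * exp (-(μt * y))) =
        μt / (μc * (μc - μt)) := by
    rw [integral_integral_mul_exponential_density_shift_mul _ (fun t ↦ t) (by linarith),
      integral_id_mul_exponential_density (sub_pos.mpr hc), sub_add_cancel, ← div_eq_mul_inv,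
      div_div]
  refine ⟨?_, expected_wait⟩
  rw [expected_wait]
  ring
end

section
/- Let σ > 0, κ > 0 and μ_t, μ_c, λ with 0 < λ < μ_t, λ < μ_c and μ_t ≠ μ_c; set a = μ_t − λ and b = μ_c − λ. For x, s > 0 define P0(x,s) = (a/(μ_t−μ_c))·exp(−b s)·(exp(−a x) − exp(−b x)) − exp(−a x) + 1 and F(x,s) = ∫₀^∞ exp(−κ t)·[ (a/(μ_t−μ_c))·exp(−b s)·( b·exp(−b(x+t)) − a·exp(−a(x+t)) ) + a·exp(−a(x+t)) ] dt. Set A = a·b/((κ+a)(κ+b)) and B = (μ_c/(κ+μ_c)) · ∫₀^∞ ∫₀^∞ exp(−κ(x+s))·(P0(x,s) + F(x,s))·λ·exp(−λ x)·μ_t·exp(−μ_t s) dx ds. Then σ² − (σ²λ/κ)·(A − B) = σ² − σ²·λ·a·b/(κ(κ+a)(κ+b)) + (σ²·λ²·μ_t·μ_c/((κ+μ_t)(κ+μ_c))) · [ 1/(κ(κ+λ)) − 1/((κ+a)(κ+b)) + λ/((κ+b)(κ+a)(κ+μ_t+μ_c−λ)) − b/((κ+a)(κ+μ_t)(κ+μ_t+μ_c−λ))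 − a/((κ+b)(κ+μ_c)(κ+μ_t+μ_c−λ)) ]. -/
open MeasureTheory Real Set

/-!
Given `X = x` and `S_t = s`, the total waiting time `W` satisfies
`P(W > t) = (1 - w) e^{-a(x+t)} + w e^{-b(x+t)}` with `w = a / (μt - μc) e^{-bs}`: a signed mixture
of exponentials, shifted by `x`. The Laplace–Stieltjes transform of `W` is therefore
`1 - κ ∫ e^{-κt} P(W > t) dt = 1 - κ ((1 - w) e^{-ax} / (κ + a) + w e^{-bx} / (κ + b))`.
This is again an exponential sum in `x`, and affine in `e^{-bs}`, so averaging over the exponential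
variables `X` and `S_t` only evaluates Laplace transforms of exponentials, at `κ + λ` and `κ + μt`.
Because `(μt - λ) - (μc - λ) = μt - μc`, the denominator `μt - μc` finally cancels.
-/

/-- Absolutely convergent one-sided Laplace transform: `∫₀^∞ e^{-κt} f t dt` converges and has the
value `L`. Convergence is part of the predicate so that transforms can be added. -/
structure HasLaplaceTransform (f : ℝ → ℝ) (κ L : ℝ) : Prop where
  integrableOn : IntegrableOn (fun t ↦ exp (-(κ * t)) * f t) (Ioi 0)
  integral_eq : ∫ t in Ioi (0 : ℝ), exp (-(κ * t)) * f t = L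

namespace HasLaplaceTransform

variable {f g : ℝ → ℝ} {κ L M : ℝ}

lemma congr (hf : HasLaplaceTransform f κ L) (hfg : EqOn f g (Ioi 0)) :
    HasLaplaceTransform g κ L := by
  have hexp : EqOn (fun t ↦ exp (-(κ * t)) * f t) (fun t ↦ exp (-(κ * t)) * g t) (Ioi 0) :=
    fun t ht ↦ congrArg _ (hfg ht)
  exact ⟨hf.integrableOn.congr_fun hexp measurableSet_Ioi,
    (setIntegral_congr_fun measurableSet_Ioi hexp).symm.trans hf.integral_eq⟩

lemma const_mul (hf : HasLaplaceTransform f κ L) (c : ℝ) :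
    HasLaplaceTransform (fun t ↦ c * f t) κ (c * L) where
  integrableOn := by simpa only [mul_left_comm c] using! hf.integrableOn.const_mul c
  integral_eq := by simp only [mul_left_comm _ c, integral_const_mul, hf.integral_eq]

lemma sub (hf : HasLaplaceTransform f κ L) (hg : HasLaplaceTransform g κ M) :
    HasLaplaceTransform (fun t ↦ f t - g t) κ (L - M) where
  integrableOn := by simpa only [mul_sub] using! hf.integrableOn.sub hg.integrableOn
  integral_eq := by
    simp only [mul_sub]
    rw [integral_sub hf.integrableOn hg.integrableOn, hf.integral_eq, hg.integral_eq]

lemma sum {ι : Type*} {s : Finset ι} {f : ι → ℝ → ℝ} {L : ι → ℝ}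
    (hf : ∀ i ∈ s, HasLaplaceTransform (f i) κ (L i)) :
    HasLaplaceTransform (fun t ↦ ∑ i ∈ s, f i t) κ (∑ i ∈ s, L i) where
  integrableOn := by
    simpa only [Finset.mul_sum] using! integrable_finsetSum s fun i hi ↦ (hf i hi).integrableOn
  integral_eq := by
    simp only [Finset.mul_sum]
    rw [integral_finsetSum s fun i hi ↦ (hf i hi).integrableOn]
    exact Finset.sum_congr rfl fun i hi ↦ (hf i hi).integral_eq

lemma exp_neg_mul {p : ℝ} (hf : HasLaplaceTransform f (κ + p) L) :
    HasLaplaceTransform (fun t ↦ exp (-(p * t)) * f t) κ L := by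
  have hexp (t : ℝ) : exp (-(κ * t)) * (exp (-(p * t)) * f t) = exp (-((κ + p) * t)) * f t := by
    rw [← mul_assoc, ← exp_add, add_mul, neg_add]
  exact ⟨by simpa only [hexp] using hf.integrableOn, by simpa only [hexp] using hf.integral_eq⟩

end HasLaplaceTransform

lemma hasLaplaceTransform_const {κ : ℝ} (hκ : 0 < κ) (c : ℝ) :
    HasLaplaceTransform (fun _ ↦ c) κ (c / κ) := by
  have hint := integrableOn_exp_mul_Ioi (neg_lt_zero.mpr hκ) 0
  have hval := integral_exp_mul_Ioi (neg_lt_zero.mpr hκ) 0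
  simp only [neg_mul] at hint hval
  refine ⟨hint.mul_const c, ?_⟩
  rw [integral_mul_const, hval, mul_zero, neg_zero, exp_zero, neg_div_neg_eq, one_div_mul_eq_div]

lemma hasLaplaceTransform_exp_neg {κ p : ℝ} (h : 0 < κ + p) :
    HasLaplaceTransform (fun t ↦ exp (-(p * t))) κ (1 / (κ + p)) := by
  simpa only [mul_one] using (hasLaplaceTransform_const h 1).exp_neg_mul

lemma integral_integral_exp_densities {g : ℝ → ℝ → ℝ} {L : ℝ → ℝ} {κ lam μ M : ℝ}
    (hg : ∀ s, 0 < s → HasLaplaceTransform (g · s) (κ + lam) (L s))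
    (hL : HasLaplaceTransform L (κ + μ) M) :
    ∫ s in Ioi (0 : ℝ), ∫ x in Ioi (0 : ℝ),
        exp (-(κ * (x + s))) * g x s * (lam * exp (-(lam * x))) * (μ * exp (-(μ * s)))
      = lam * μ * M := by
  have hinner (s : ℝ) (hs : 0 < s) : ∫ x in Ioi (0 : ℝ),
      exp (-(κ * (x + s))) * g x s * (lam * exp (-(lam * x))) * (μ * exp (-(μ * s)))
        = lam * μ * (exp (-(κ * s)) * (exp (-(μ * s)) * L s)) := by
    rw [← (hg s hs).exp_neg_mul.integral_eq, ← integral_const_mul, ← integral_const_mul,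
      ← integral_const_mul]
    congr 1 with x
    rw [mul_add, neg_add, exp_add]
    ring
  rw [setIntegral_congr_fun measurableSet_Ioi hinner, integral_const_mul,
    hL.exp_neg_mul.integral_eq]

section ExpMixture

variable {ι : Type*} [Fintype ι]

/-- Exponential sum with weights `w` and rates `p`. When `∑ i, w i = 1` it is the tail of a
hyperexponential law; negative weights are allowed, as in the tandem queue. -/
noncomputable def expMixture (w p : ι → ℝ) (y : ℝ) : ℝ :=
  ∑ i, w i * exp (-(p i * y))

lemma expMixture_add (w p : ι → ℝ) (x y : ℝ) :
    expMixture w p (x + y) = expMixture (fun i ↦ w i * exp (-(p i * x))) p y := by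
  simp only [expMixture, mul_add, neg_add, exp_add, mul_assoc]

lemma hasLaplaceTransform_expMixture (w : ι → ℝ) {p : ι → ℝ} {κ : ℝ} (h : ∀ i, 0 < κ + p i) :
    HasLaplaceTransform (expMixture w p) κ (∑ i, w i / (κ + p i)) := by
  simpa only [mul_one_div] using! HasLaplaceTransform.sum
    fun i (_ : i ∈ Finset.univ) ↦ (hasLaplaceTransform_exp_neg (h i)).const_mul (w i)

/-- The left side is `E[e^{-κW}]` for `W ≥ 0` with tail `P(W > t) = expMixture w p (x + t)`: an atom
at `0` plus the transform of the density. -/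
lemma one_sub_expMixture_add_integral (w : ι → ℝ) {p : ι → ℝ} {κ : ℝ} (h : ∀ i, 0 < κ + p i)
    (x : ℝ) :
    1 - expMixture w p x
        + ∫ t in Ioi (0 : ℝ), exp (-(κ * t)) * expMixture (fun i ↦ w i * p i) p (x + t)
      = 1 - κ * expMixture (fun i ↦ w i / (κ + p i)) p x := by
  simp only [expMixture_add, (hasLaplaceTransform_expMixture _ h).integral_eq]
  rw [sub_add, sub_right_inj, expMixture, expMixture, Finset.mul_sum, ← Finset.sum_sub_distrib]
  refine Finset.sum_congr rfl fun i _ ↦ ?_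
  have hκp : κ + p i ≠ 0 := (h i).ne'
  field_simp
  ring

lemma hasLaplaceTransform_one_sub_mul_expMixture (w : ι → ℝ) {p : ι → ℝ} {ν : ℝ} (hν : 0 < ν)
    (h : ∀ i, 0 < ν + p i) (κ : ℝ) :
    HasLaplaceTransform (fun x ↦ 1 - κ * expMixture w p x) ν
      (1 / ν - κ * ∑ i, w i / (ν + p i)) :=
  (hasLaplaceTransform_const hν 1).sub ((hasLaplaceTransform_expMixture w h).const_mul κ)

end ExpMixture

section TandemQueue

/-- Weights, at the rates `![a, b]`, of the tail of the total waiting time given the transmission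
time `s`; the paper has `c = a / (μt - μc)`. -/
noncomputable def waitingWeights (b c s : ℝ) : Fin 2 → ℝ :=
  ![1 - c * exp (-(b * s)), c * exp (-(b * s))]

/-- `E[e^{-κW} | X = x, S_t = s]` for the total waiting time `W`, that is, the paper's
`P0 x s + F x s` in closed form. -/
noncomputable def waitingTransform (κ a b c x s : ℝ) : ℝ :=
  1 - κ * expMixture (fun i ↦ waitingWeights b c s i / (κ + ![a, b] i)) ![a, b] x

variable {κ a b : ℝ}

lemma zeroWait_add_integral_density (ha : 0 < κ + a) (hb : 0 < κ + b) (c x s : ℝ) :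
    c * exp (-(b * s)) * (exp (-(a * x)) - exp (-(b * x))) - exp (-(a * x)) + 1
        + ∫ t in Ioi (0 : ℝ), exp (-(κ * t)) *
            (c * exp (-(b * s)) * (b * exp (-(b * (x + t))) - a * exp (-(a * (x + t))))
              + a * exp (-(a * (x + t))))
      = waitingTransform κ a b c x s := by
  rw [waitingTransform, ← one_sub_expMixture_add_integral _ (Fin.forall_fin_two.mpr ⟨ha, hb⟩)]
  simp only [expMixture, waitingWeights, Fin.sum_univ_two, Matrix.cons_val_zero,
    Matrix.cons_val_one]
  congr 1
  · ring
  · congr 1 with t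
    ring

lemma hasLaplaceTransform_waitingTransform {ν : ℝ} (hν : 0 < ν) (ha : 0 < ν + a)
    (hb : 0 < ν + b) (c s : ℝ) :
    HasLaplaceTransform (waitingTransform κ a b c · s) ν
      (1 / ν - κ / ((κ + a) * (ν + a))
        - κ * c * (1 / ((κ + b) * (ν + b)) - 1 / ((κ + a) * (ν + a))) * exp (-(b * s))) := by
  have hrates : ∀ i, 0 < ν + ![a, b] i := Fin.forall_fin_two.mpr ⟨ha, hb⟩
  have hvalue : 1 / ν - κ / ((κ + a) * (ν + a))
        - κ * c * (1 / ((κ + b) * (ν + b)) - 1 / ((κ + a) * (ν + a))) * exp (-(b * s))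
      = 1 / ν - κ * ∑ i, waitingWeights b c s i / (κ + ![a, b] i) / (ν + ![a, b] i) := by
    simp only [waitingWeights, Fin.sum_univ_two, Matrix.cons_val_zero, Matrix.cons_val_one, div_div]
    ring
  rw [hvalue]
  exact hasLaplaceTransform_one_sub_mul_expMixture _ hν hrates κ

lemma integral_integral_of_eq_waitingTransform {g : ℝ → ℝ → ℝ} {μ lam c : ℝ}
    (hκlam : 0 < κ + lam) (hκμ : 0 < κ + μ) (hκμb : 0 < κ + μ + b)
    (ha : 0 < κ + lam + a) (hb : 0 < κ + lam + b)
    (hg : ∀ s, 0 < s → ∀ x, 0 < x → g x s = waitingTransform κ a b c x s) :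
    ∫ s in Ioi (0 : ℝ), ∫ x in Ioi (0 : ℝ),
        exp (-(κ * (x + s))) * g x s * (lam * exp (-(lam * x))) * (μ * exp (-(μ * s)))
      = lam * μ * ((1 / (κ + lam) - κ / ((κ + a) * (κ + lam + a))) / (κ + μ)
        - κ * c * (1 / ((κ + b) * (κ + lam + b)) - 1 / ((κ + a) * (κ + lam + a)))
          * (1 / (κ + μ + b))) :=
  integral_integral_exp_densities
    (fun s hs ↦ (hasLaplaceTransform_waitingTransform hκlam ha hb c s).congr
      fun x hx ↦ (hg s hs x hx).symm)
    ((hasLaplaceTransform_const hκμ _).sub ((hasLaplaceTransform_exp_neg hκμb).const_mul _))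

lemma div_sub_mul_one_div_sub_one_div {ν : ℝ} (hab : a ≠ b) (hκa : κ + a ≠ 0) (hκb : κ + b ≠ 0)
    (hνa : ν + a ≠ 0) (hνb : ν + b ≠ 0) :
    a / (a - b) * (1 / ((κ + b) * (ν + b)) - 1 / ((κ + a) * (ν + a)))
      = a / ((κ + a) * (ν + b)) * (1 / (κ + b) + 1 / (ν + a)) := by
  have hsub : a - b ≠ 0 := sub_ne_zero.mpr hab
  field_simp
  ring

lemma average_waitingTransform_eq_partial_fractions {lam : ℝ} (hab : a ≠ b) (hκ : κ ≠ 0)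
    (hκlam : κ + lam ≠ 0) (hκa : κ + a ≠ 0) (hκb : κ + b ≠ 0)
    (hκlama : κ + lam + a ≠ 0) (hκlamb : κ + lam + b ≠ 0) (hκlamab : κ + lam + a + b ≠ 0) :
    (1 / (κ + lam) - κ / ((κ + a) * (κ + lam + a))) / (κ + lam + a)
        - κ * (a / (a - b)) * (1 / ((κ + b) * (κ + lam + b)) - 1 / ((κ + a) * (κ + lam + a)))
          * (1 / (κ + lam + a + b))
      = κ / (κ + lam + a) * (1 / (κ * (κ + lam)) - 1 / ((κ + a) * (κ + b))
          + lam / ((κ + b) * (κ + a) * (κ + lam + a + b))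
          - b / ((κ + a) * (κ + lam + a) * (κ + lam + a + b))
          - a / ((κ + b) * (κ + lam + b) * (κ + lam + a + b))) := by
  rw [mul_assoc κ, div_sub_mul_one_div_sub_one_div hab hκa hκb hκlama hκlamb]
  field_simp
  ring

lemma integral_integral_of_eq_waitingTransform_tandem {g : ℝ → ℝ → ℝ} {lam : ℝ}
    (hκ : 0 < κ) (hlam : 0 < lam) (ha : 0 < a) (hb : 0 < b) (hab : a ≠ b)
    (hg : ∀ s, 0 < s → ∀ x, 0 < x → g x s = waitingTransform κ a b (a / (a - b)) x s) :
    ∫ s in Ioi (0 : ℝ), ∫ x in Ioi (0 : ℝ), exp (-(κ * (x + s))) * g x s *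
        (lam * exp (-(lam * x))) * ((lam + a) * exp (-((lam + a) * s)))
      = lam * (lam + a) * (κ / (κ + lam + a) * (1 / (κ * (κ + lam)) - 1 / ((κ + a) * (κ + b))
          + lam / ((κ + b) * (κ + a) * (κ + lam + a + b))
          - b / ((κ + a) * (κ + lam + a) * (κ + lam + a + b))
          - a / ((κ + b) * (κ + lam + b) * (κ + lam + a + b)))) := by
  rw [integral_integral_of_eq_waitingTransform (by positivity) (by positivity) (by positivity)
    (by positivity) (by positivity) hg, ← add_assoc κ lam a]
  congr 1
  apply average_waitingTransform_eq_partial_fractions hab <;> positivity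

end TandemQueue

/-- Proposition 2: closed form of the process-related timeliness of information
for the M/M/1–M/M/1 tandem with a stationary Gauss–Markov source. -/
theorem stmt_9 (σ κ μt μc lam : ℝ) (hσ : 0 < σ) (hκ : 0 < κ)
    (hlam : 0 < lam) (ht : lam < μt) (hc : lam < μc) (hne : μt ≠ μc)
    (a b : ℝ) (ha : a = μt - lam) (hb : b = μc - lam)
    (P0 F : ℝ → ℝ → ℝ)
    (hP0 : ∀ x s : ℝ, 0 < x → 0 < s →
      P0 x s = a / (μt - μc) * exp (-(b * s)) * (exp (-(a * x)) - exp (-(b * x)))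
        - exp (-(a * x)) + 1)
    (hF : ∀ x s : ℝ, 0 < x → 0 < s →
      F x s = ∫ t in Ioi (0:ℝ), exp (-(κ * t)) *
        (a / (μt - μc) * exp (-(b * s))
            * (b * exp (-(b * (x + t))) - a * exp (-(a * (x + t))))
          + a * exp (-(a * (x + t)))))
    (A B : ℝ)
    (hA : A = a * b / ((κ + a) * (κ + b)))
    (hB : B = μc / (κ + μc) *
      ∫ s in Ioi (0:ℝ), ∫ x in Ioi (0:ℝ),
        exp (-(κ * (x + s))) * (P0 x s + F x s) * (lam * exp (-(lam * x)))
          * (μt * exp (-(μt * s)))) :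
    σ ^ 2 - σ ^ 2 * lam / κ * (A - B)
      = σ ^ 2 - σ ^ 2 * lam * a * b / (κ * (κ + a) * (κ + b))
        + σ ^ 2 * lam ^ 2 * μt * μc / ((κ + μt) * (κ + μc)) *
          (1 / (κ * (κ + lam)) - 1 / ((κ + a) * (κ + b))
            + lam / ((κ + b) * (κ + a) * (κ + μt + μc - lam))
            - b / ((κ + a) * (κ + μt) * (κ + μt + μc - lam))
            - a / ((κ + b) * (κ + μc) * (κ + μt + μc - lam))) := by
  have ha0 : 0 < a := by linarith
  have hb0 : 0 < b := by linarith
  obtain rfl : μt = lam + a := by linarith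
  obtain rfl : μc = lam + b := by linarith
  have hab : a ≠ b := fun h ↦ hne (by rw [h])
  rw [add_sub_add_left_eq_sub] at hP0 hF
  have hPF : ∀ s, 0 < s → ∀ x, 0 < x →
      P0 x s + F x s = waitingTransform κ a b (a / (a - b)) x s := by
    intro s hs x hx
    rw [hP0 x s hx hs, hF x s hx hs,
      zeroWait_add_integral_density (by positivity) (by positivity)]
  have hrate : κ + (lam + a) + (lam + b) - lam = κ + lam + a + b := by ring
  rw [hA, hB, integral_integral_of_eq_waitingTransform_tandem hκ hlam ha0 hb0 hab hPF,
    hrate]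
  field_simp
  ring
end

section
/- Let σ > 0, κ > 0, and μ_t, μ_c with 0 < μ_t < μ_c. Let E1 = ∫₀^∞ exp(−κt)·(∫₀^t μ_t·exp(−μ_t u)·(μ_c−μ_t)·exp(−(μ_c−μ_t)(t−u)) du) dt and E2 = ∫₀^∞ exp(−κy)·(∫₀^∞ exp(−κt)·(μ_c−μ_t)·exp(−(μ_c−μ_t)(t+y)) dt)·μ_t·exp(−μ_t y) dy. Then σ² − (σ²μ_t/κ)·( E1 − E2·(μ_t/(κ+μ_t))·(μ_c/(κ+μ_c)) ) = σ² − σ²·μ_t²·(μ_c−μ_t)/(κ(κ+μ_t)(κ+μ_c−μ_t)) + σ²·μ_t³·μ_c·(μ_c−μ_t)/(κ(κ+μ_t)(κ+μ_c)²(κ+μ_c−μ_t)). -/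
open MeasureTheory Real Set intervalIntegral

/-!
`E1` is the Laplace transform at `κ` of a convolution of two exponential densities, hence the
product of their transforms. In `E2` the conditional waiting-time density
`(μc - μt) e^{-(μc - μt)(t + y)}` is the exponential density in `t` damped by the factor
`e^{-(μc - μt) y}`, which merely shifts the argument of the remaining transform in `y` from `κ` to
`κ + (μc - μt)`.
-/

section LaplaceTransform

variable {E F G : Type*} [NormedAddCommGroup E] [NormedSpace ℝ E] [NormedAddCommGroup F]
  [NormedSpace ℝ F] [NormedAddCommGroup G] [NormedSpace ℝ G]

/-- The one-sided Laplace transform `∫₀^∞ e^{-st} f(t) dt` at a real argument `s`: for the density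
`f` of a nonnegative random variable `X` it is `𝔼[e^{-sX}]`. It has the junk value `0` where the
integral does not converge absolutely. -/
noncomputable def laplaceTransform (f : ℝ → E) (s : ℝ) : E :=
  ∫ t in Ioi (0 : ℝ), exp (-(s * t)) • f t

theorem laplaceTransform_exp_neg_mul_smul (f : ℝ → E) (c s : ℝ) :
    laplaceTransform (fun t => exp (-(c * t)) • f t) s = laplaceTransform f (s + c) := by
  simp only [laplaceTransform, smul_smul, ← exp_add, ← neg_add, ← add_mul]

theorem laplaceTransform_const_smul (f : ℝ → E) (c s : ℝ) :
    laplaceTransform (fun t => c • f t) s = c • laplaceTransform f s := by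
  simp only [laplaceTransform, smul_comm _ c, MeasureTheory.integral_smul]

theorem laplaceTransform_posConvolution [CompleteSpace E] [CompleteSpace F] [CompleteSpace G]
    {f : ℝ → E} {g : ℝ → F} {s : ℝ}
    (hf : IntegrableOn (fun t => exp (-(s * t)) • f t) (Ioi 0))
    (hg : IntegrableOn (fun t => exp (-(s * t)) • g t) (Ioi 0)) (L : E →L[ℝ] F →L[ℝ] G) :
    laplaceTransform (fun t => ∫ u in (0 : ℝ)..t, L (f u) (g (t - u))) s =
      L (laplaceTransform f s) (laplaceTransform g s) := by
  have exp_smul_apply (t u : ℝ) : exp (-(s * t)) • L (f u) (g (t - u)) =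
      L (exp (-(s * u)) • f u) (exp (-(s * (t - u))) • g (t - u)) := by
    rw [map_smul, map_smul, smul_apply, smul_smul, ← exp_add]
    ring_nf
  simp only [laplaceTransform, ← intervalIntegral.integral_smul, exp_smul_apply]
  exact integral_posConvolution hf hg L

end LaplaceTransform

section ExponentialDensity

variable {r s : ℝ}

theorem exp_neg_mul_smul_exponentialDensity (r s t : ℝ) :
    exp (-(s * t)) • (r * exp (-(r * t))) = r * exp (-(s + r) * t) := by
  rw [smul_eq_mul, mul_left_comm, ← exp_add]
  ring_nf

theorem integrableOn_exp_neg_mul_smul_exponentialDensity (h : 0 < s + r) :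
    IntegrableOn (fun t => exp (-(s * t)) • (r * exp (-(r * t)))) (Ioi 0) := by
  simp only [exp_neg_mul_smul_exponentialDensity]
  exact (integrableOn_exp_mul_Ioi (neg_lt_zero.2 h) 0).const_mul r

theorem laplaceTransform_exponentialDensity (h : 0 < s + r) :
    laplaceTransform (fun t => r * exp (-(r * t))) s = r / (s + r) := by
  simp only [laplaceTransform, exp_neg_mul_smul_exponentialDensity]
  rw [MeasureTheory.integral_const_mul, integral_exp_mul_Ioi (neg_lt_zero.2 h), mul_zero, exp_zero,
    neg_div_neg_eq, mul_one_div]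

theorem laplaceTransform_exponentialDensity_posConvolution {q : ℝ} (hq : 0 < s + q)
    (hr : 0 < s + r) :
    laplaceTransform (fun t => ∫ u in (0 : ℝ)..t,
      q * exp (-(q * u)) * (r * exp (-(r * (t - u))))) s = q / (s + q) * (r / (s + r)) := by
  rw [← laplaceTransform_exponentialDensity hq, ← laplaceTransform_exponentialDensity hr]
  exact laplaceTransform_posConvolution (integrableOn_exp_neg_mul_smul_exponentialDensity hq)
    (integrableOn_exp_neg_mul_smul_exponentialDensity hr) (ContinuousLinearMap.mul ℝ ℝ)

theorem laplaceTransform_exponentialDensity_add (h : 0 < s + r) (y : ℝ) :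
    laplaceTransform (fun t => r * exp (-(r * (t + y)))) s = exp (-(r * y)) * (r / (s + r)) := by
  rw [← laplaceTransform_exponentialDensity h, ← smul_eq_mul, ← laplaceTransform_const_smul]
  congr 1 with t
  rw [smul_eq_mul, mul_left_comm, ← exp_add]
  ring_nf

theorem laplaceTransform_laplaceTransform_exponentialDensity_add_smul {E : Type*}
    [NormedAddCommGroup E] [NormedSpace ℝ E] (h : 0 < s + r) (f : ℝ → E) :
    laplaceTransform (fun y => laplaceTransform (fun t => r * exp (-(r * (t + y)))) s • f y) s =
      (r / (s + r)) • laplaceTransform f (s + r) := by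
  simp only [laplaceTransform_exponentialDensity_add h, mul_comm _ (r / (s + r)), mul_smul]
  rw [laplaceTransform_const_smul, laplaceTransform_exp_neg_mul_smul]

end ExponentialDensity

theorem stmt_10_general (σ κ μt μc : ℝ) (hκ : κ ≠ 0) (ht : 0 < κ + μt) (hc : 0 < κ + μc)
    (hw : 0 < κ + (μc - μt)) (E1 E2 : ℝ)
    (hE1 : E1 = ∫ t in Ioi (0 : ℝ), exp (-(κ * t)) *
        ∫ u in (0 : ℝ)..t, μt * exp (-(μt * u)) * ((μc - μt) * exp (-((μc - μt) * (t - u)))))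
    (hE2 : E2 = ∫ y in Ioi (0 : ℝ),
        exp (-(κ * y)) *
          (∫ t in Ioi (0 : ℝ), exp (-(κ * t)) * ((μc - μt) * exp (-((μc - μt) * (t + y)))))
          * (μt * exp (-(μt * y)))) :
    σ ^ 2 - σ ^ 2 * μt / κ * (E1 - E2 * (μt / (κ + μt)) * (μc / (κ + μc)))
      = σ ^ 2 - σ ^ 2 * μt ^ 2 * (μc - μt) / (κ * (κ + μt) * (κ + μc - μt))
        + σ ^ 2 * μt ^ 3 * μc * (μc - μt)
            / (κ * (κ + μt) * (κ + μc) ^ 2 * (κ + μc - μt)) := by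
  have hE1_eq : E1 = μt / (κ + μt) * ((μc - μt) / (κ + (μc - μt))) :=
    hE1.trans (laplaceTransform_exponentialDensity_posConvolution ht hw)
  have hrate : κ + (μc - μt) + μt = κ + μc := by ring
  have hE2_eq : E2 = (μc - μt) / (κ + (μc - μt)) * (μt / (κ + μc)) := by
    have htransform := laplaceTransform_laplaceTransform_exponentialDensity_add_smul hw
      fun y => μt * exp (-(μt * y))
    rw [laplaceTransform_exponentialDensity (hrate ▸ hc), hrate] at htransform
    simp only [mul_assoc] at hE2
    exact hE2.trans (by simpa only [laplaceTransform, smul_eq_mul] using htransform)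
  rw [hE1_eq, hE2_eq, add_sub_assoc]
  field_simp
  ring

/-- Corollary 2: process-related timeliness of information under the zero-wait
policy in the M/M/1–M/M/1 tandem. -/
theorem stmt_10 (σ κ μt μc : ℝ) (hσ : 0 < σ) (hκ : 0 < κ) (ht : 0 < μt) (hc : μt < μc)
    (E1 E2 : ℝ)
    (hE1 : E1 = ∫ t in Ioi (0:ℝ), exp (-(κ * t)) *
        ∫ u in (0:ℝ)..t, μt * exp (-(μt * u)) * ((μc - μt) * exp (-((μc - μt) * (t - u)))))
    (hE2 : E2 = ∫ y in Ioi (0:ℝ),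
        exp (-(κ * y)) *
          (∫ t in Ioi (0:ℝ), exp (-(κ * t)) * ((μc - μt) * exp (-((μc - μt) * (t + y)))))
          * (μt * exp (-(μt * y)))) :
    σ ^ 2 - σ ^ 2 * μt / κ * (E1 - E2 * (μt / (κ + μt)) * (μc / (κ + μc)))
      = σ ^ 2 - σ ^ 2 * μt ^ 2 * (μc - μt) / (κ * (κ + μt) * (κ + μc - μt))
        + σ ^ 2 * μt ^ 3 * μc * (μc - μt)
            / (κ * (κ + μt) * (κ + μc) ^ 2 * (κ + μc - μt)) :=
  stmt_10_general σ κ μt μc hκ.ne' (by linarith) (by linarith) (by linarith) E1 E2 hE1 hE2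
end

section
/- Let λ, μ be real numbers with 0 < λ < μ and let y > 0. Define g : (0,∞) → ℝ by g(t) = μ·exp(−μ t)·exp(−(μ−λ)y) + (μ(μ−λ)/(2μ−λ)) · h(t), where h(t) = exp(−(μ−λ)y)·(exp((μ−λ)t) − exp(−μ t)) if t ≤ y and h(t) = (exp(μ y) − exp(−(μ−λ)y))·exp(−μ t) if t > y. Then ∫₀^∞ t·g(t) dt = 1/μ + y − (1 − exp(−(μ−λ)y))/(μ − λ). -/
open MeasureTheory Real Set

/-!
Write `a = μ - λ`. When `a > 0`, `g` is the density of `(y - W)⁺ + S` for independent exponential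
variables `W` of rate `a` and `S` of rate `μ`: its first summand comes from the event `W ≥ y`, and
the second, carrying `h`, from the event `W < y`. With `p = exp (-a y)` these events contribute
`p / μ` and `(1 - p) / μ + y - (1 - p) / a` to the mean. Both contributions reduce to integrals of
`t * exp (c * t)`, and the resulting identity persists for every real `a` other than `0` and `-μ`.
-/

section ExponentialMoment

open Filter Topology

lemma hasDerivAt_mul_exp_mul {c : ℝ} (hc : c ≠ 0) (t : ℝ) :
    HasDerivAt (fun t ↦ (t / c - 1 / c ^ 2) * exp (c * t)) (t * exp (c * t)) t := by
  have hlin : HasDerivAt (fun t : ℝ ↦ t / c - 1 / c ^ 2) (1 / c) t :=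
    ((hasDerivAt_id t).div_const c).sub_const _
  have hexp : HasDerivAt (fun t : ℝ ↦ exp (c * t)) (exp (c * t) * (c * 1)) t :=
    ((hasDerivAt_id t).const_mul c).exp
  convert! hlin.mul hexp using 1
  field_simp
  ring

lemma integral_mul_exp_mul {c : ℝ} (hc : c ≠ 0) (x y : ℝ) :
    ∫ t in x..y, t * exp (c * t) =
      (y / c - 1 / c ^ 2) * exp (c * y) - (x / c - 1 / c ^ 2) * exp (c * x) :=
  intervalIntegral.integral_eq_sub_of_hasDerivAt (fun t _ ↦ hasDerivAt_mul_exp_mul hc t)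
    (Continuous.intervalIntegrable (by fun_prop) x y)

lemma tendsto_exp_mul_atTop_nhds_zero {c : ℝ} (hc : c < 0) :
    Tendsto (fun t ↦ exp (c * t)) atTop (𝓝 0) :=
  tendsto_exp_atBot.comp (tendsto_id.const_mul_atTop_of_neg hc)

lemma tendsto_mul_exp_mul_atTop_nhds_zero {c : ℝ} (hc : c < 0) :
    Tendsto (fun t ↦ t * exp (c * t)) atTop (𝓝 0) := by
  simpa only [rpow_one, neg_neg] using
    tendsto_rpow_mul_exp_neg_mul_atTop_nhds_zero 1 (-c) (neg_pos.mpr hc)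

lemma integrableOn_mul_exp_mul_Ioi {c : ℝ} (hc : c < 0) (x : ℝ) :
    IntegrableOn (fun t ↦ t * exp (c * t)) (Ioi x) := by
  have hhalf : c / 2 < 0 := by linarith
  refine integrable_of_isBigO_exp_neg (neg_pos.mpr hhalf) (by fun_prop) ?_
  have hbounded : (fun t ↦ t * exp (c / 2 * t)) =O[atTop] fun _ ↦ (1 : ℝ) :=
    (tendsto_mul_exp_mul_atTop_nhds_zero hhalf).isBigO_one ℝ
  refine (hbounded.mul (Asymptotics.isBigO_refl (fun t ↦ exp (c / 2 * t)) atTop)).congr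
    (fun t ↦ ?_) (fun t ↦ by rw [neg_neg, one_mul])
  rw [mul_assoc, ← exp_add, ← add_mul, add_halves]

lemma integral_mul_exp_mul_Ioi {c : ℝ} (hc : c < 0) (x : ℝ) :
    ∫ t in Ioi x, t * exp (c * t) = (1 / c ^ 2 - x / c) * exp (c * x) := by
  have hlim : Tendsto (fun t ↦ (t / c - 1 / c ^ 2) * exp (c * t)) atTop (𝓝 0) := by
    have := ((tendsto_mul_exp_mul_atTop_nhds_zero hc).const_mul (1 / c)).sub
      ((tendsto_exp_mul_atTop_nhds_zero hc).const_mul (1 / c ^ 2))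
    rw [mul_zero, mul_zero, sub_zero] at this
    exact this.congr fun t ↦ by ring
  rw [integral_Ioi_of_hasDerivAt_of_tendsto' (fun t _ ↦ hasDerivAt_mul_exp_mul hc.ne t)
    (integrableOn_mul_exp_mul_Ioi hc x) hlim]
  ring

end ExponentialMoment

/-- The function `h` of the paper, with `a = μ - λ` and `b = μ`. It is `a + b` times the convolution
at `t` of `s ↦ exp (-a (y - s))` on `[0, y]` with `s ↦ exp (-b s)` on `[0, ∞)`. Hence, for
independent exponential variables `W` of rate `a` and `S` of rate `b`, the density of `y - W + S`
restricted to the event `W < y` is `a b / (a + b)` times this function. The formula is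
meaningful only for `t ≥ 0`. -/
noncomputable def expConvKernel (a b y t : ℝ) : ℝ :=
  if t ≤ y then exp (-(a * y)) * (exp (a * t) - exp (-(b * t)))
  else (exp (b * y) - exp (-(a * y))) * exp (-(b * t))

section ExpConvKernel

variable (a b y : ℝ)

lemma eqOn_mul_expConvKernel_Iic :
    EqOn (fun t ↦ t * expConvKernel a b y t)
      (fun t ↦ exp (-(a * y)) * (t * exp (a * t) - t * exp (-b * t))) (Iic y) := by
  intro t ht
  simp only [expConvKernel, if_pos (mem_Iic.mp ht), neg_mul]
  ring

lemma eqOn_mul_expConvKernel_Ioi :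
    EqOn (fun t ↦ t * expConvKernel a b y t)
      (fun t ↦ (exp (b * y) - exp (-(a * y))) * (t * exp (-b * t))) (Ioi y) := by
  intro t ht
  simp only [expConvKernel, if_neg (not_le.mpr (mem_Ioi.mp ht)), neg_mul]
  ring

variable {b}

lemma integrableOn_mul_expConvKernel_Ioi (hb : 0 < b) (x : ℝ) :
    IntegrableOn (fun t ↦ t * expConvKernel a b y t) (Ioi x) := by
  have hIoc : IntegrableOn (fun t ↦ t * expConvKernel a b y t) (Ioc x y) :=
    (integrableOn_congr_fun ((eqOn_mul_expConvKernel_Iic a b y).mono Ioc_subset_Iic_self)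
      measurableSet_Ioc).mpr (Continuous.integrableOn_Ioc (by fun_prop))
  have hIoi : IntegrableOn (fun t ↦ t * expConvKernel a b y t) (Ioi y) :=
    (integrableOn_congr_fun (eqOn_mul_expConvKernel_Ioi a b y) measurableSet_Ioi).mpr
      ((integrableOn_mul_exp_mul_Ioi (neg_neg_of_pos hb) y).const_mul _)
  exact (hIoc.union hIoi).mono_set Ioi_subset_Ioc_union_Ioi

variable {a y}

lemma intervalIntegral_mul_expConvKernel (ha : a ≠ 0) (hb : b ≠ 0) (hy : 0 ≤ y) :
    ∫ t in 0..y, t * expConvKernel a b y t =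
      y / a - 1 / a ^ 2 +
        exp (-(a * y)) * (1 / a ^ 2 - 1 / b ^ 2 + (y / b + 1 / b ^ 2) * exp (-(b * y))) := by
  rw [intervalIntegral.integral_of_le hy, setIntegral_congr_fun measurableSet_Ioc
      ((eqOn_mul_expConvKernel_Iic a b y).mono Ioc_subset_Iic_self),
    ← intervalIntegral.integral_of_le hy, intervalIntegral.integral_const_mul,
    intervalIntegral.integral_sub (Continuous.intervalIntegrable (by fun_prop) _ _)
      (Continuous.intervalIntegrable (by fun_prop) _ _),
    integral_mul_exp_mul ha, integral_mul_exp_mul (neg_ne_zero.mpr hb)]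
  simp only [mul_zero, exp_zero, neg_mul, exp_neg]
  field_simp
  ring

lemma setIntegral_Ioi_mul_expConvKernel (hb : 0 < b) :
    ∫ t in Ioi y, t * expConvKernel a b y t =
      (exp (b * y) - exp (-(a * y))) * ((y / b + 1 / b ^ 2) * exp (-(b * y))) := by
  rw [setIntegral_congr_fun measurableSet_Ioi (eqOn_mul_expConvKernel_Ioi a b y),
    integral_const_mul, integral_mul_exp_mul_Ioi (neg_neg_of_pos hb)]
  simp only [neg_mul]
  ring

lemma integral_Ioi_zero_mul_expConvKernel (ha : a ≠ 0) (hb : 0 < b) (hy : 0 ≤ y) :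
    ∫ t in Ioi 0, t * expConvKernel a b y t =
      (a + b) / (a * b) * ((1 - exp (-(a * y))) / b + y - (1 - exp (-(a * y))) / a) := by
  rw [← intervalIntegral.integral_interval_add_Ioi
      (integrableOn_mul_expConvKernel_Ioi a y hb 0) (integrableOn_mul_expConvKernel_Ioi a y hb y),
    intervalIntegral_mul_expConvKernel ha hb.ne' hy, setIntegral_Ioi_mul_expConvKernel hb,
    exp_neg, exp_neg]
  field_simp
  ring

end ExpConvKernel

theorem stmt_12_general {lam mu y : ℝ} (hmu : 0 < mu) (hlam : lam ≠ mu) (hlam' : lam ≠ 2 * mu)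
    (hy : 0 ≤ y) {g : ℝ → ℝ}
    (hg : ∀ t : ℝ, 0 < t →
      g t = mu * exp (-(mu * t)) * exp (-((mu - lam) * y))
        + mu * (mu - lam) / (2 * mu - lam) *
          (if t ≤ y then exp (-((mu - lam) * y)) * (exp ((mu - lam) * t) - exp (-(mu * t)))
           else (exp (mu * y) - exp (-((mu - lam) * y))) * exp (-(mu * t)))) :
    ∫ t in Ioi (0 : ℝ), t * g t
      = 1 / mu + y - (1 - exp (-((mu - lam) * y))) / (mu - lam) := by
  have ha : mu - lam ≠ 0 := sub_ne_zero.mpr hlam.symm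
  have hsum : 2 * mu - lam ≠ 0 := sub_ne_zero.mpr hlam'.symm
  have hweight : mu * (mu - lam) / (2 * mu - lam) * ((mu - lam + mu) / ((mu - lam) * mu)) = 1 := by
    rw [show mu - lam + mu = 2 * mu - lam by ring, mul_comm mu, div_mul_div_cancel₀ hsum,
      div_self (mul_ne_zero ha hmu.ne')]
  have hsplit : EqOn (fun t ↦ t * g t) (fun t ↦
      mu * exp (-((mu - lam) * y)) * (t * exp (-mu * t)) +
        mu * (mu - lam) / (2 * mu - lam) * (t * expConvKernel (mu - lam) mu y t)) (Ioi 0) := by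
    intro t ht
    simp only [hg t ht, expConvKernel, neg_mul]
    ring
  rw [setIntegral_congr_fun measurableSet_Ioi hsplit,
    integral_add ((integrableOn_mul_exp_mul_Ioi (neg_neg_of_pos hmu) 0).const_mul _)
      ((integrableOn_mul_expConvKernel_Ioi _ y hmu 0).const_mul _),
    integral_const_mul, integral_const_mul, integral_mul_exp_mul_Ioi (neg_neg_of_pos hmu),
    integral_Ioi_zero_mul_expConvKernel ha hmu hy, ← mul_assoc _ (_ / _),
    hweight, mul_zero, exp_zero]
  field_simp
  ring

/-- Equation (56): conditional expectation E[X | D = y] in an M/M/1 queue. -/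
theorem stmt_12 (lam mu : ℝ) (hlam : 0 < lam) (hmu : lam < mu) (y : ℝ) (hy : 0 < y)
    (g : ℝ → ℝ)
    (hg : ∀ t : ℝ, 0 < t →
      g t = mu * exp (-(mu * t)) * exp (-((mu - lam) * y))
        + mu * (mu - lam) / (2 * mu - lam) *
          (if t ≤ y then exp (-((mu - lam) * y)) * (exp ((mu - lam) * t) - exp (-(mu * t)))
           else (exp (mu * y) - exp (-((mu - lam) * y))) * exp (-(mu * t)))) :
    ∫ t in Ioi (0:ℝ), t * g t
      = 1 / mu + y - (1 - exp (-((mu - lam) * y))) / (mu - lam) := by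
  exact stmt_12_general (hlam.trans hmu) hmu.ne (by linarith) hy.le hg
end

section
/- Let λ₁, λ₂, μ_t, μ_c be real numbers with 0 < λ₁ < μ_t, λ₂ ≥ 0 and λ₁ + λ₂ < μ_c. Then ( ∫₀^∞ (1/μ_t + y − (1 − exp(−(μ_t−λ₁)y))/(μ_t−λ₁)) · (μ_c−λ₂)·exp(−(μ_c−λ₂)y) dy ) · ( ∫₀^∞ t·(μ_c−λ₁−λ₂)·exp(−(μ_c−λ₁−λ₂)t) dt ) = (1/(μ_c−λ₁−λ₂)) · [ 1/(μ_c−λ₂) − λ₁/(μ_t(μ_t−λ₁)) + (μ_c−λ₂)/((μ_t−λ₁)(μ_t+μ_c−λ₁−λ₂)) ]. -/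
open MeasureTheory Real Set

/-!
Given `I_n`, the inter-departure time `D` is exponential of rate `a = μc - lam2`. With
`b = μt - lam1`, the conditional mean `E[X | D = y]` is a combination of `1`, `y` and
`exp (-(b * y))`, so averaging it over `D` takes only the mean `1 / a` and the Laplace transform
`a / (a + b)` of that law. The result is `1 / μt + 1 / a - 1 / (a + b)`, of which the bracket in
the theorem is a partial fraction form.
-/

section ExponentialIntegrals

variable {a : ℝ}

lemma integrableOn_pow_mul_exp_neg_mul_Ioi (n : ℕ) (ha : 0 < a) :
    IntegrableOn (fun x : ℝ => x ^ n * exp (-(a * x))) (Ioi 0) := by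
  have hn : (-1 : ℝ) < n := neg_one_lt_zero.trans_le n.cast_nonneg
  simpa only [rpow_natCast, rpow_one, neg_mul] using
    integrableOn_rpow_mul_exp_neg_mul_rpow hn one_pos ha

lemma integral_pow_mul_exp_neg_mul_Ioi (n : ℕ) (ha : 0 < a) :
    ∫ x in Ioi (0 : ℝ), x ^ n * exp (-(a * x)) = n.factorial / a ^ (n + 1) := by
  have gamma_integral := integral_rpow_mul_exp_neg_mul_Ioi n.cast_add_one_pos ha
  simp only [add_sub_cancel_right, rpow_natCast, Gamma_nat_eq_factorial] at gamma_integral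
  rw [gamma_integral, ← Nat.cast_add_one, rpow_natCast, one_div_pow, one_div_mul_eq_div]

lemma integral_mul_exponential_density (ha : 0 < a) :
    ∫ x in Ioi (0 : ℝ), x * (a * exp (-(a * x))) = 1 / a := by
  have first_moment := integral_pow_mul_exp_neg_mul_Ioi 1 ha
  simp only [pow_one, Nat.factorial_one, Nat.cast_one] at first_moment
  simp_rw [mul_left_comm _ a]
  rw [integral_const_mul, first_moment]
  field_simp

lemma integral_add_sub_one_sub_exp_div_mul_exponential_density {b : ℝ} (c : ℝ) (ha : 0 < a)
    (hb : b ≠ 0) (hab : 0 < a + b) :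
    ∫ y in Ioi (0 : ℝ), (c + y - (1 - exp (-(b * y))) / b) * (a * exp (-(a * y))) =
      c + 1 / a - 1 / (a + b) := by
  have integrand_eq (y : ℝ) :
      (c + y - (1 - exp (-(b * y))) / b) * (a * exp (-(a * y))) =
        (c - 1 / b) * a * (y ^ 0 * exp (-(a * y))) + a * (y ^ 1 * exp (-(a * y))) +
          a / b * (y ^ 0 * exp (-((a + b) * y))) := by
    rw [add_mul a b, neg_add, exp_add]
    ring
  have const_int := (integrableOn_pow_mul_exp_neg_mul_Ioi 0 ha).const_mul ((c - 1 / b) * a)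
  have linear_int := (integrableOn_pow_mul_exp_neg_mul_Ioi 1 ha).const_mul a
  have exp_int := (integrableOn_pow_mul_exp_neg_mul_Ioi 0 hab).const_mul (a / b)
  simp_rw [integrand_eq]
  rw [integral_add (by exact const_int.add linear_int) exp_int, integral_add const_int linear_int]
  simp only [integral_const_mul, integral_pow_mul_exp_neg_mul_Ioi _ ha,
    integral_pow_mul_exp_neg_mul_Ioi _ hab, Nat.factorial_zero, Nat.factorial_one, Nat.cast_one]
  field_simp
  ring

end ExponentialIntegrals

theorem stmt_13_general {lam1 lam2 μt μc : ℝ} (hμt : μt ≠ 0) (hne : lam1 ≠ μt)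
    (hD : lam2 < μc) (hW : lam1 + lam2 < μc) (hDX : lam1 + lam2 < μt + μc) :
    (∫ y in Ioi (0 : ℝ),
        (1 / μt + y - (1 - exp (-((μt - lam1) * y))) / (μt - lam1))
          * ((μc - lam2) * exp (-((μc - lam2) * y))))
      * (∫ t in Ioi (0 : ℝ), t * ((μc - lam1 - lam2) * exp (-((μc - lam1 - lam2) * t))))
      = 1 / (μc - lam1 - lam2) *
          (1 / (μc - lam2) - lam1 / (μt * (μt - lam1))
            + (μc - lam2) / ((μt - lam1) * (μt + μc - lam1 - lam2))) := by
  have hb : μt - lam1 ≠ 0 := sub_ne_zero.mpr hne.symm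
  have ha : 0 < μc - lam2 := sub_pos.mpr hD
  have hab : 0 < μc - lam2 + (μt - lam1) := by linarith
  have sum_eq : μt + μc - lam1 - lam2 = μc - lam2 + (μt - lam1) := by ring
  have partial_fractions : 1 / μt + 1 / (μc - lam2) - 1 / (μc - lam2 + (μt - lam1)) =
      1 / (μc - lam2) - lam1 / (μt * (μt - lam1)) +
        (μc - lam2) / ((μt - lam1) * (μc - lam2 + (μt - lam1))) := by
    field_simp
    ring
  rw [integral_add_sub_one_sub_exp_div_mul_exponential_density _ ha hb hab,
    integral_mul_exponential_density (by linarith), partial_fractions, sum_eq, mul_comm]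

/-- Lemma 5: E[X_{i,n} W'_{i,n,c} | I_n] as a product of conditional expectations. -/
theorem stmt_13 (lam1 lam2 μt μc : ℝ) (h1 : 0 < lam1) (ht : lam1 < μt)
    (h2 : 0 ≤ lam2) (hc : lam1 + lam2 < μc) :
    (∫ y in Ioi (0:ℝ),
        (1 / μt + y - (1 - exp (-((μt - lam1) * y))) / (μt - lam1))
          * ((μc - lam2) * exp (-((μc - lam2) * y))))
      * (∫ t in Ioi (0:ℝ), t * ((μc - lam1 - lam2) * exp (-((μc - lam1 - lam2) * t))))
      = 1 / (μc - lam1 - lam2) *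
          (1 / (μc - lam2) - lam1 / (μt * (μt - lam1))
            + (μc - lam2) / ((μt - lam1) * (μt + μc - lam1 - lam2))) := by
  exact stmt_13_general (by linarith) ht.ne (by linarith) hc (by linarith)
end

section
/- Let μ_t, μ_c > 0 be fixed real numbers. The function f(λ) = λ²/(μ_t²(μ_t−λ)) + 1/μ_t + λ²/(μ_c²(μ_c−λ)) + 1/μ_c + λ²/(μ_t μ_c (μ_t+μ_c−λ)) + 1/λ is strictly convex on the open interval (0, min(μ_t, μ_c)). -/
open Set

/-!
By Sedrakyan's inequality `(x + y)² / (u + v) ≤ x² / u + y² / v`, the quotient `x² / u` is jointly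
convex on `u > 0`. Restricting it to the line `u = c (m - x)` makes the three rational terms
convex, with `m` one of `μt`, `μc`, `μt + μc`; strictness comes from `1 / λ` alone.
-/

section LinearOrderedField

variable {𝕜 : Type*} [Field 𝕜] [LinearOrder 𝕜] [IsStrictOrderedRing 𝕜]

theorem convexOn_sq_div :
    ConvexOn 𝕜 (univ ×ˢ Ioi (0 : 𝕜)) (fun p : 𝕜 × 𝕜 => p.1 ^ 2 / p.2) := by
  refine convexOn_iff_forall_pos.2 ⟨convex_univ.prod (convex_Ioi 0), ?_⟩
  rintro ⟨x, u⟩ ⟨-, hu : 0 < u⟩ ⟨y, v⟩ ⟨-, hv : 0 < v⟩ a b ha hb -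
  have titu : (a * x + b * y) ^ 2 / (a * u + b * v)
      ≤ (a * x) ^ 2 / (a * u) + (b * y) ^ 2 / (b * v) := by
    have hpos : ∀ i ∈ Finset.univ, 0 < ![a * u, b * v] i := by
      simp [Fin.forall_fin_two, mul_pos ha hu, mul_pos hb hv]
    simpa using Finset.sq_sum_div_le_sum_sq_div Finset.univ ![a * x, b * y] hpos
  calc (a * x + b * y) ^ 2 / (a * u + b * v)
      ≤ (a * x) ^ 2 / (a * u) + (b * y) ^ 2 / (b * v) := titu
    _ = a * (x ^ 2 / u) + b * (y ^ 2 / v) := by field_simp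

theorem convexOn_sq_div_mul_sub {c : 𝕜} (hc : 0 < c) (m : 𝕜) :
    ConvexOn 𝕜 (Iio m) (fun x => x ^ 2 / (c * (m - x))) := by
  let graph : 𝕜 →ᵃ[𝕜] 𝕜 × 𝕜 :=
    (AffineMap.id 𝕜 𝕜).prod (c • (AffineMap.const 𝕜 𝕜 m - AffineMap.id 𝕜 𝕜))
  have maps_graph : MapsTo graph (Iio m) (univ ×ˢ Ioi 0) :=
    fun _ hx => ⟨mem_univ _, mul_pos hc (sub_pos.2 hx)⟩
  exact (convexOn_sq_div.comp_affineMap graph).subset maps_graph (convex_Iio m)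

end LinearOrderedField

theorem strictConvexOn_one_div : StrictConvexOn ℝ (Ioi 0) (fun x : ℝ => 1 / x) := by
  simpa only [zpow_neg_one, one_div] using
    strictConvexOn_zpow (m := -1) (by decide) (by decide)

/-- Appendix E, part 1: the timeliness of information of Proposition 1 is strictly
convex in the task generation rate λ on (0, min(μ_t, μ_c)). -/
theorem stmt_17 (μt μc : ℝ) (ht : 0 < μt) (hc : 0 < μc) :
    StrictConvexOn ℝ (Ioo (0:ℝ) (min μt μc))
      (fun lam : ℝ =>
        lam ^ 2 / (μt ^ 2 * (μt - lam)) + 1 / μt + lam ^ 2 / (μc ^ 2 * (μc - lam))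
          + 1 / μc + lam ^ 2 / (μt * μc * (μt + μc - lam)) + 1 / lam) := by
  have hI : Convex ℝ (Ioo 0 (min μt μc)) := convex_Ioo _ _
  have transmission := (convexOn_sq_div_mul_sub (pow_pos ht 2) μt).subset
    (fun _ hx => hx.2.trans_le (min_le_left _ _)) hI
  have computation := (convexOn_sq_div_mul_sub (pow_pos hc 2) μc).subset
    (fun _ hx => hx.2.trans_le (min_le_right _ _)) hI
  have tandem := (convexOn_sq_div_mul_sub (mul_pos ht hc) (μt + μc)).subset
    (fun _ hx => hx.2.trans_le ((min_le_left _ _).trans (le_add_of_nonneg_right hc.le))) hI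
  have generation := strictConvexOn_one_div.subset (fun _ hx => hx.1) hI
  exact ((((transmission.add_const (1 / μt)).add computation).add_const (1 / μc)).add
    tandem).add_strictConvexOn generation
end

section
/- Let λ > 0 be a fixed real number. The function f(u, v) = λ²/(u·v·(u+v−λ)) is strictly convex on the open convex set S = {(u, v) ∈ ℝ² : u > 0, v > 0, u + v > λ}. -/
/-!
The reciprocal of a product of positive functions is the exponential of minus the sum of their
logarithms. The logarithm of a concave `g` is concave, strictly so along segments at whose ends `g`
takes different values, so the sum of the logarithms is strictly concave as soon as the factors
separate points; the exponential of its negative is then strictly convex. Here the factors are the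
affine functions `u`, `v` and `u + v - λ`, and the first two already separate points.
-/

section LogConcave

variable {E ι : Type*} [AddCommMonoid E] [SMul ℝ E] {s : Set E}

lemma log_lt_log_of_concaveOn_of_ne {g : E → ℝ} (hg : ConcaveOn ℝ s g) (hpos : ∀ x ∈ s, 0 < g x)
    {x y : E} (hx : x ∈ s) (hy : y ∈ s) (hne : g x ≠ g y) {a b : ℝ} (ha : 0 < a) (hb : 0 < b)
    (hab : a + b = 1) :
    a • Real.log (g x) + b • Real.log (g y) < Real.log (g (a • x + b • y)) := by
  have hgx := hpos x hx
  have hgy := hpos y hy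
  calc a • Real.log (g x) + b • Real.log (g y)
      < Real.log (a • g x + b • g y) := strictConcaveOn_log_Ioi.2 hgx hgy hne ha hb hab
    _ ≤ Real.log (g (a • x + b • y)) :=
        Real.log_le_log (by positivity) (hg.2 hx hy ha.le hb.le hab)

lemma concaveOn_log_of_concaveOn {g : E → ℝ} (hg : ConcaveOn ℝ s g) (hpos : ∀ x ∈ s, 0 < g x) :
    ConcaveOn ℝ s (fun x ↦ Real.log (g x)) := by
  refine ⟨hg.1, fun x hx y hy a b ha hb hab ↦ ?_⟩
  have hmean : 0 < a • g x + b • g y := convex_Ioi (0 : ℝ) (hpos x hx) (hpos y hy) ha hb hab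
  calc a • Real.log (g x) + b • Real.log (g y)
      ≤ Real.log (a • g x + b • g y) :=
        strictConcaveOn_log_Ioi.concaveOn.2 (hpos x hx) (hpos y hy) ha hb hab
    _ ≤ Real.log (g (a • x + b • y)) := Real.log_le_log hmean (hg.2 hx hy ha hb hab)

lemma strictConcaveOn_log_prod {t : Finset ι} {g : ι → E → ℝ} (hs : Convex ℝ s)
    (hg : ∀ i ∈ t, ConcaveOn ℝ s (g i)) (hpos : ∀ i ∈ t, ∀ x ∈ s, 0 < g i x)
    (hsep : ∀ x ∈ s, ∀ y ∈ s, x ≠ y → ∃ i ∈ t, g i x ≠ g i y) :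
    StrictConcaveOn ℝ s (fun x ↦ Real.log (∏ i ∈ t, g i x)) := by
  have log_prod : ∀ x ∈ s, Real.log (∏ i ∈ t, g i x) = ∑ i ∈ t, Real.log (g i x) :=
    fun x hx ↦ Real.log_prod fun i hi ↦ (hpos i hi x hx).ne'
  refine ⟨hs, fun x hx y hy hxy a b ha hb hab ↦ ?_⟩
  obtain ⟨j, hj, hne⟩ := hsep x hx y hy hxy
  simp only [log_prod x hx, log_prod y hy, log_prod _ (hs hx hy ha.le hb.le hab), Finset.smul_sum,
    ← Finset.sum_add_distrib]
  exact Finset.sum_lt_sum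
    (fun i hi ↦ (concaveOn_log_of_concaveOn (hg i hi) (hpos i hi)).2 hx hy ha.le hb.le hab)
    ⟨j, hj, log_lt_log_of_concaveOn_of_ne (hg j hj) (hpos j hj) hx hy hne ha hb hab⟩

lemma strictConvexOn_exp_comp {f : E → ℝ} (hf : StrictConvexOn ℝ s f) :
    StrictConvexOn ℝ s (fun x ↦ Real.exp (f x)) := by
  refine ⟨hf.1, fun x hx y hy hxy a b ha hb hab ↦ ?_⟩
  calc Real.exp (f (a • x + b • y))
      < Real.exp (a • f x + b • f y) := Real.exp_lt_exp.2 (hf.2 hx hy hxy ha hb hab)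
    _ ≤ a • Real.exp (f x) + b • Real.exp (f y) :=
        convexOn_exp.2 (Set.mem_univ _) (Set.mem_univ _) ha.le hb.le hab

lemma strictConvexOn_const_div_of_strictConcaveOn_log {h : E → ℝ} {k : ℝ} (hk : 0 < k)
    (hpos : ∀ x ∈ s, 0 < h x) (hlog : StrictConcaveOn ℝ s (fun x ↦ Real.log (h x))) :
    StrictConvexOn ℝ s (fun x ↦ k / h x) := by
  have exp_eq : s.EqOn (fun x ↦ Real.exp (-Real.log (h x) + Real.log k)) (fun x ↦ k / h x) := by
    intro x hx
    simp only [Real.exp_add, Real.exp_neg, Real.exp_log hk, Real.exp_log (hpos x hx)]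
    exact inv_mul_eq_div _ _
  exact (strictConvexOn_exp_comp (hlog.neg.add_const (Real.log k))).congr exp_eq

theorem strictConvexOn_const_div_prod {t : Finset ι} {g : ι → E → ℝ} {k : ℝ} (hk : 0 < k)
    (hs : Convex ℝ s) (hg : ∀ i ∈ t, ConcaveOn ℝ s (g i)) (hpos : ∀ i ∈ t, ∀ x ∈ s, 0 < g i x)
    (hsep : ∀ x ∈ s, ∀ y ∈ s, x ≠ y → ∃ i ∈ t, g i x ≠ g i y) :
    StrictConvexOn ℝ s (fun x ↦ k / ∏ i ∈ t, g i x) :=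
  strictConvexOn_const_div_of_strictConcaveOn_log hk
    (fun x hx ↦ Finset.prod_pos fun i hi ↦ hpos i hi x hx)
    (strictConcaveOn_log_prod hs hg hpos hsep)

end LogConcave

lemma convex_setOf_pos_pos_lt_add (c : ℝ) :
    Convex ℝ {p : ℝ × ℝ | 0 < p.1 ∧ 0 < p.2 ∧ c < p.1 + p.2} :=
  (convex_halfSpace_gt (LinearMap.fst ℝ ℝ ℝ).isLinear 0).inter <|
    (convex_halfSpace_gt (LinearMap.snd ℝ ℝ ℝ).isLinear 0).inter <|
      convex_halfSpace_gt (LinearMap.fst ℝ ℝ ℝ + LinearMap.snd ℝ ℝ ℝ).isLinear c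

theorem stmt_19_general {k : ℝ} (hk : 0 < k) (lam : ℝ) :
    StrictConvexOn ℝ {p : ℝ × ℝ | 0 < p.1 ∧ 0 < p.2 ∧ lam < p.1 + p.2}
      (fun p : ℝ × ℝ => k / (p.1 * p.2 * (p.1 + p.2 - lam))) := by
  set S : Set (ℝ × ℝ) := {p | 0 < p.1 ∧ 0 < p.2 ∧ lam < p.1 + p.2}
  let factor : Fin 3 → ℝ × ℝ → ℝ := ![fun p ↦ p.1, fun p ↦ p.2, fun p ↦ p.1 + p.2 - lam]
  have hS : Convex ℝ S := convex_setOf_pos_pos_lt_add lam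
  have hconcave : ∀ i, ConcaveOn ℝ S (factor i) :=
    Fin.forall_fin_succ.2 ⟨(LinearMap.fst ℝ ℝ ℝ).concaveOn hS, Fin.forall_fin_two.2
      ⟨(LinearMap.snd ℝ ℝ ℝ).concaveOn hS,
        ((LinearMap.fst ℝ ℝ ℝ + LinearMap.snd ℝ ℝ ℝ).concaveOn hS).sub (convexOn_const lam hS)⟩⟩
  have hpos : ∀ i, ∀ p ∈ S, 0 < factor i p :=
    Fin.forall_fin_succ.2 ⟨fun _ hp ↦ hp.1, Fin.forall_fin_two.2
      ⟨fun _ hp ↦ hp.2.1, fun _ hp ↦ sub_pos.2 hp.2.2⟩⟩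
  have hsep : ∀ p q : ℝ × ℝ, p ≠ q → ∃ i, factor i p ≠ factor i q := by
    intro p q hpq
    by_contra! heq
    exact hpq (Prod.ext (heq 0) (heq 1))
  have hprod : StrictConvexOn ℝ S (fun p ↦ k / ∏ i, factor i p) :=
    strictConvexOn_const_div_prod hk hS (fun i _ ↦ hconcave i) (fun i _ ↦ hpos i)
      (fun p _ q _ hpq ↦ (hsep p q hpq).imp fun i hi ↦ ⟨Finset.mem_univ i, hi⟩)
  simpa [factor, Fin.prod_univ_three] using hprod

/-- Appendix E, part 3: the coupling term λ²/(u·v·(u+v−λ)) is strictly convex on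
{(u,v) : u > 0, v > 0, u + v > λ}. -/
theorem stmt_19 (lam : ℝ) (hlam : 0 < lam) :
    StrictConvexOn ℝ {p : ℝ × ℝ | 0 < p.1 ∧ 0 < p.2 ∧ lam < p.1 + p.2}
      (fun p : ℝ × ℝ => lam ^ 2 / (p.1 * p.2 * (p.1 + p.2 - lam))) :=
  stmt_19_general (pow_pos hlam 2) lam
end
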